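/- For any polynomial f of degree at most k on ℝ^n (n ≥ 3) and R > 0, the function x ↦ ∫_{|y|=R} |x−y|^{2−n} f(y) dσ(y), defined for |x| < R, is a polynomial of degree at most k in x. -/

import Mathlib

open MeasureTheory Metric
noncomputable section

def gz {S : Type*} [CommRing S] [Algebra ℝ S] (l : ℝ) (A B : S) : ℕ → S
  | 0 => 1
  | 1 => (2 * l) • A
  | m + 2 => ((m : ℝ) + 2)⁻¹ • ((2 * ((m : ℝ) + 1 + l)) • (A * gz l A B (m + 1))
      - ((m : ℝ) + 2 * l) • (B * gz l A B m))

lemma gz_succ_succ {S : Type*} [CommRing S] [Algebra ℝ S] (l : ℝ) (A B : S) (m : ℕ) :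
    ((m : ℝ) + 2) • gz l A B (m + 2) = (2 * ((m : ℝ) + 1 + l)) • (A * gz l A B (m + 1))
      - ((m : ℝ) + 2 * l) • (B * gz l A B m) := by
  rw [gz, smul_smul, mul_inv_cancel₀ (by positivity), one_smul]

lemma gz_map {S T : Type*} [CommRing S] [Algebra ℝ S] [CommRing T] [Algebra ℝ T] (l : ℝ)
    (A B : S) (φ : S →ₐ[ℝ] T) (m : ℕ) : φ (gz l A B m) = gz l (φ A) (φ B) m := by
  induction m using Nat.twoStepInduction with
  | zero => simp [gz]
  | one => simp [gz]
  | more m h1 h2 => simp [gz, h1, h2]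

lemma choose_rec (a : ℂ) (i : ℕ) :
    ((i : ℂ) + 1) * Ring.choose a (i + 1) = (a - i) * Ring.choose a i := by
  have h1 := Ring.descPochhammer_eq_factorial_smul_choose a i
  have h2 := Ring.descPochhammer_eq_factorial_smul_choose a (i + 1)
  rw [descPochhammer_succ_right, Polynomial.smeval_mul, h1] at h2
  simp [Polynomial.smeval_natCast, Nat.factorial_succ] at h2
  have : ((i.factorial : ℕ) : ℂ) ≠ 0 := by exact_mod_cast i.factorial_ne_zero
  apply mul_left_cancel₀ this
  linear_combination -h2

def ucoef (l : ℝ) (w : ℂ) (i : ℕ) : ℂ := Ring.choose (-(l : ℂ)) i * (-w) ^ i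

lemma ucoef_rec (l : ℝ) (w : ℂ) (i : ℕ) :
    ((i : ℂ) + 1) * ucoef l w (i + 1) = w * (l + i) * ucoef l w i := by
  have := choose_rec (-(l : ℂ)) i
  unfold ucoef
  rw [pow_succ]
  linear_combination (-w) ^ i * (-w) * this

open PowerSeries in
lemma ode (l : ℝ) (w : ℂ) : (1 - C w * X) * d⁄dX ℂ (mk (ucoef l w)) =
    C ((l : ℂ) * w) * mk (ucoef l w) := by
  ext i
  rw [sub_mul, one_mul, map_sub, mul_assoc, coeff_C_mul, coeff_C_mul, coeff_derivative, coeff_mk,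
    coeff_mk]
  cases i with
  | zero =>
    have := ucoef_rec l w 0
    simp at this ⊢
    rw [this]; ring
  | succ i =>
    rw [coeff_succ_X_mul, coeff_derivative, coeff_mk]
    have := ucoef_rec l w (i + 1)
    push_cast at this ⊢
    linear_combination this

def ccoef (l : ℝ) (w : ℂ) (m : ℕ) : ℂ :=
  ∑ p ∈ Finset.HasAntidiagonal.antidiagonal m, ucoef l w p.1 * ucoef l (starRingEnd ℂ w) p.2

open PowerSeries in
lemma ode2 (l : ℝ) (w w' : ℂ) :
    (1 - C (w + w') * X + C (w * w') * (X * X)) * d⁄dX ℂ (mk (ucoef l w) * mk (ucoef l w')) =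
      (C (l * (w + w')) - C (2 * l * (w * w')) * X) * (mk (ucoef l w) * mk (ucoef l w')) := by
  have h1 := ode l w
  have h2 := ode l w'
  rw [Derivation.leibniz]
  simp only [map_add, map_mul, smul_eq_mul, map_ofNat] at *
  linear_combination (1 - C w' * X) * mk (ucoef l w') * h1 + (1 - C w * X) * mk (ucoef l w) * h2

open PowerSeries in
lemma ccoef_eq (l : ℝ) (w : ℂ) (m : ℕ) :
    ccoef l w m = gz l (w.re : ℂ) ((‖w‖ ^ 2 : ℝ) : ℂ) m := by
  have key := ode2 l w (starRingEnd ℂ w)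
  set g := (mk (ucoef l w) * mk (ucoef l (starRingEnd ℂ w)) : PowerSeries ℂ) with hg
  have hc : ∀ m, ccoef l w m = coeff m g := by
    intro m; rw [hg, coeff_mul]; simp [ccoef]
  have hA : w + starRingEnd ℂ w = 2 * (w.re : ℂ) := by
    rw [Complex.add_conj]; push_cast; ring
  have hB : w * starRingEnd ℂ w = ((‖w‖ ^ 2 : ℝ) : ℂ) := by
    rw [Complex.mul_conj, Complex.normSq_eq_norm_sq]
  rw [hA, hB] at key
  have k0 := congrArg (coeff 0) key
  have kk := fun m => congrArg (coeff (m + 1)) key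
  simp only [add_mul, sub_mul, one_mul, map_add, map_sub, mul_assoc, coeff_C_mul, coeff_succ_X_mul,
    coeff_zero_X_mul, coeff_derivative] at k0 kk
  have h0 : coeff 0 g = 1 := by rw [← hc]; simp [ccoef, ucoef]
  have h1 : coeff 1 g = 2 * l * (w.re : ℂ) := by
    simp only [h0] at k0
    push_cast at k0
    linear_combination k0
  have hX : ∀ m, coeff m (X * d⁄dX ℂ g) = m * coeff m g := by
    intro m
    cases m with
    | zero => simp
    | succ m => rw [coeff_succ_X_mul, coeff_derivative]; push_cast; ring
  induction m using Nat.twoStepInduction with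
  | zero => rw [hc, h0, gz]
  | one => rw [hc, h1, gz]; simp
  | more m i1 i2 =>
    rw [hc] at *
    have h3 : ((m : ℝ) + 2 : ℂ) ≠ 0 := by
      have : (0:ℝ) < m + 2 := by positivity
      exact_mod_cast this.ne'
    apply mul_left_cancel₀ h3
    have := gz_succ_succ l (w.re : ℂ) ((‖w‖ ^ 2 : ℝ) : ℂ) m
    simp only [Complex.real_smul] at this
    push_cast at this i1 i2 ⊢
    rw [this, ← i1, ← i2]
    have k := kk m
    rw [hX] at k
    push_cast at k
    linear_combination k

lemma ucoef_hasSum (l : ℝ) (w : ℂ) (hw : ‖w‖ < 1) :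
    HasSum (ucoef l w) ((1 - w) ^ (-(l : ℂ))) := by
  have h := (Complex.one_add_cpow_hasFPowerSeriesOnBall_zero (a := -(l : ℂ))).hasSum (y := -w)
    (by simpa [← ENNReal.ofReal_one, Metric.eball_ofReal] using hw)
  rw [zero_add, ← sub_eq_add_neg] at h
  have e : ucoef l w = fun n => (binomialSeries ℂ (-(l : ℂ)) n) fun _ => -w := by
    funext i
    rw [binomialSeries_apply]
    simp [ucoef]
  rw [e]
  exact h

lemma ucoef_summable (l : ℝ) (w : ℂ) (hw : ‖w‖ < 1) : Summable (fun i => ‖ucoef l w i‖) := by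
  exact (ucoef_hasSum l w hw).summable.norm

def bnd (l : ℝ) (r : ℝ) (m : ℕ) : ℝ :=
  ∑ p ∈ Finset.HasAntidiagonal.antidiagonal m, ‖ucoef l (r : ℂ) p.1‖ * ‖ucoef l (r : ℂ) p.2‖

lemma bnd_summable (l : ℝ) (r : ℝ) (h0 : 0 ≤ r) (h1 : r < 1) : Summable (bnd l r) := by
  have h : Summable (fun i => ‖ucoef l (r : ℂ) i‖) :=
    ucoef_summable l r (by rwa [Complex.norm_real, Real.norm_of_nonneg h0])
  have := summable_norm_sum_mul_antidiagonal_of_summable_norm (f := fun i => ‖ucoef l (r : ℂ) i‖)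
    (g := fun i => ‖ucoef l (r : ℂ) i‖) (by simpa using h) (by simpa using h)
  exact this.of_norm

lemma ucoef_norm (l : ℝ) (w : ℂ) (i : ℕ) : ‖ucoef l w i‖ = ‖ucoef l (‖w‖ : ℂ) i‖ := by
  simp [ucoef]

lemma ccoef_norm (l : ℝ) (w : ℂ) (m : ℕ) : ‖ccoef l w m‖ ≤ bnd l ‖w‖ m := by
  refine (norm_sum_le _ _).trans (Finset.sum_le_sum fun p _ => ?_)
  rw [norm_mul, ucoef_norm l w, ucoef_norm l (starRingEnd ℂ w)]
  simp

lemma ccoef_hasSum (l : ℝ) (w : ℂ) (hw : ‖w‖ < 1) :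
    HasSum (ccoef l w) (((‖1 - w‖ ^ (-(2 * l)) : ℝ)) : ℂ) := by
  have hw' : ‖starRingEnd ℂ w‖ < 1 := by simpa using hw
  have hs := summable_norm_sum_mul_antidiagonal_of_summable_norm
    (ucoef_summable l w hw) (ucoef_summable l _ hw')
  have ht := tsum_mul_tsum_eq_tsum_sum_antidiagonal_of_summable_norm
    (ucoef_summable l w hw) (ucoef_summable l _ hw')
  rw [(ucoef_hasSum l w hw).tsum_eq, (ucoef_hasSum l _ hw').tsum_eq] at ht
  have : (1 - w) ^ (-(l : ℂ)) * (1 - starRingEnd ℂ w) ^ (-(l : ℂ)) =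
      (((‖1 - w‖ ^ (-(2 * l)) : ℝ)) : ℂ) := by
    have harg : (1 - w).arg ≠ Real.pi := by
      have : (1 - w) ∈ Complex.slitPlane := by
        have := Complex.mem_slitPlane_of_norm_lt_one (z := -w) (by simpa using hw)
        simpa [sub_eq_add_neg] using this
      exact (Complex.mem_slitPlane_iff_arg.1 this).1
    have e : (1 - starRingEnd ℂ w) ^ (-(l : ℂ)) = starRingEnd ℂ ((1 - w) ^ (-(l : ℂ))) := by
      have := Complex.conj_cpow (1 - w) (-(l : ℂ)) harg
      simp at this
      rw [this]
    rw [e, Complex.mul_conj, Complex.normSq_eq_norm_sq]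
    have hn : ‖(1 - w) ^ (-(l : ℂ))‖ = ‖1 - w‖ ^ (-l) := by
      have := Complex.norm_cpow_real (1 - w) (-l)
      push_cast at this
      exact this
    rw [hn, ← Real.rpow_natCast, ← Real.rpow_mul (norm_nonneg _)]
    congr 3
    push_cast; ring
  rw [← this, ht]
  exact hs.of_norm.hasSum

/-- real generating function -/
lemma gz_real (l A B : ℝ) (hAB : A ^ 2 ≤ B) (hB : B < 1) :
    (∀ m, |gz l A B m| ≤ bnd l (Real.sqrt B) m) ∧
    HasSum (gz l A B) ((1 - 2 * A + B) ^ (-l)) := by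
  set w : ℂ := ⟨A, Real.sqrt (B - A ^ 2)⟩ with hw
  have hn2 : ‖w‖ ^ 2 = B := by
    rw [← Complex.normSq_eq_norm_sq, Complex.normSq_apply, hw]
    simp only
    rw [Real.mul_self_sqrt (by linarith)]; ring
  have hn : ‖w‖ = Real.sqrt B := by rw [← hn2, Real.sqrt_sq (norm_nonneg _)]
  have h1n : ‖1 - w‖ ^ 2 = 1 - 2 * A + B := by
    rw [← Complex.normSq_eq_norm_sq, Complex.normSq_apply, hw]
    simp
    rw [Real.mul_self_sqrt (by linarith)]; ring
  have hlt : ‖w‖ < 1 := by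
    have := norm_nonneg w
    nlinarith
  have hc : ∀ m, ccoef l w m = ((gz l A B m : ℝ) : ℂ) := by
    intro m
    rw [ccoef_eq, hn2]
    have := gz_map l A B Complex.ofRealAm m
    simp at this
    rw [this]
  constructor
  · intro m
    have := ccoef_norm l w m
    rw [hc, Complex.norm_real, hn] at this
    exact this
  · have := ccoef_hasSum l w hlt
    rw [← h1n, ← Real.rpow_natCast, ← Real.rpow_mul (norm_nonneg _)]
    simp only [show ccoef l w = fun m => ((gz l A B m : ℝ) : ℂ) from funext hc] at this
    rw [Complex.hasSum_ofReal] at this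
    convert this using 2
    push_cast; ring

lemma sphere_half (n : ℕ) (hn : 1 ≤ n) (v : EuclideanSpace ℝ (Fin n)) (hv : ‖v‖ = 1) :
    ∃ s : Set (EuclideanSpace ℝ (Fin n)), μH[(n : ℝ) - 1] s < ⊤ ∧
      ∀ y, ‖y‖ = 1 → inner ℝ v y ≤ 0 → y ∈ s := by
  have hfr : Module.finrank ℝ (ℝ ∙ v)ᗮ = n - 1 := by
    have h := Submodule.finrank_add_finrank_orthogonal (ℝ ∙ v)
    rw [finrank_span_singleton (by intro h; simp [h] at hv)] at h
    simp at h
    omega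
  let e : (Fin (n - 1) → ℝ) ≃L[ℝ] (ℝ ∙ v)ᗮ := ContinuousLinearEquiv.ofFinrankEq (by simp [hfr])
  let Φ : (Fin (n - 1) → ℝ) → EuclideanSpace ℝ (Fin n) := fun u => stereoInvFunAux v (e u)
  have hΦ : ContDiff ℝ 1 Φ :=
    contDiff_stereoInvFunAux.comp ((Submodule.subtypeL _).contDiff.comp e.contDiff)
  obtain ⟨r, hr⟩ : ∃ r, e.symm '' closedBall 0 2 ⊆ closedBall 0 r :=
    (((isCompact_closedBall (0 : (ℝ ∙ v)ᗮ) 2).image e.symm.continuous).isBounded).subset_closedBall 0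
  obtain ⟨K, hK⟩ := hΦ.contDiffOn.exists_lipschitzOnWith (by simp) (convex_closedBall 0 r)
    (isCompact_closedBall (0 : Fin (n - 1) → ℝ) r)
  refine ⟨Φ '' closedBall 0 r, ?_, ?_⟩
  · have hd : ((n : ℝ) - 1) = (Fintype.card (Fin (n - 1)) : ℝ) := by
      simp [Nat.cast_sub hn]
    refine (hK.hausdorffMeasure_image_le (by rw [hd]; positivity)).trans_lt ?_
    rw [hd, hausdorffMeasure_pi_real]
    refine ENNReal.mul_lt_top ?_ ?_
    · exact ENNReal.rpow_lt_top_of_nonneg (by positivity) (by simp)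
    · exact (isCompact_closedBall _ _).measure_lt_top
  · intro y hy hvy
    have hne : y ≠ v := by
      rintro rfl
      rw [real_inner_self_eq_norm_sq, hy] at hvy
      norm_num at hvy
    have := stereo_left_inv hv (x := ⟨y, by simpa using hy⟩) hne
    refine ⟨e.symm (stereoToFun v y), hr ⟨_, ?_, rfl⟩, ?_⟩
    · rw [mem_closedBall_zero_iff, stereoToFun_apply, norm_smul]
      have h1 : ‖(2 : ℝ) / (1 - inner ℝ v y)‖ ≤ 2 := by
        rw [Real.norm_of_nonneg (by apply div_nonneg <;> linarith)]
        rw [div_le_iff₀ (by linarith)]; linarith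
      have h2 : ‖(ℝ ∙ v)ᗮ.orthogonalProjectionOnto y‖ ≤ 1 := by
        rw [← hy]; exact Submodule.norm_orthogonalProjectionOnto_apply_le _ _
      have := mul_le_mul h1 h2 (norm_nonneg _) (by norm_num)
      simpa using this
    · have h3 := congrArg Subtype.val this
      simpa [Φ] using h3

open scoped Pointwise in
lemma sphere_finite (n : ℕ) (hn : 1 ≤ n) (R : ℝ) (hR : 0 < R) :
    μH[(n : ℝ) - 1] (sphere (0 : EuclideanSpace ℝ (Fin n)) R) < ⊤ := by
  let v : EuclideanSpace ℝ (Fin n) := EuclideanSpace.single ⟨0, hn⟩ 1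
  have hv : ‖v‖ = 1 := by simp [v]
  obtain ⟨s, hs, hs'⟩ := sphere_half n hn v hv
  obtain ⟨t, ht, ht'⟩ := sphere_half n hn (-v) (by simpa using hv)
  have hsub : sphere (0 : EuclideanSpace ℝ (Fin n)) R ⊆ R • (s ∪ t) := by
    intro y hy
    have hy' : ‖y‖ = R := by simpa using hy
    refine ⟨R⁻¹ • y, ?_, by simp [smul_smul, hR.ne']⟩
    have h1 : ‖R⁻¹ • y‖ = 1 := by
      rw [norm_smul, hy', norm_inv, Real.norm_of_nonneg hR.le, inv_mul_cancel₀ hR.ne']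
    rcases le_total (inner ℝ v (R⁻¹ • y)) 0 with h | h
    · exact Or.inl (hs' _ h1 h)
    · exact Or.inr (ht' _ h1 (by rw [inner_neg_left]; linarith))
  refine (measure_mono hsub).trans_lt ?_
  have h0 : (0 : ℝ) ≤ (n : ℝ) - 1 := by
    have : (1 : ℝ) ≤ n := by exact_mod_cast hn
    linarith
  rw [Measure.hausdorffMeasure_smul₀ h0 hR.ne']
  rw [ENNReal.smul_def, smul_eq_mul]
  exact ENNReal.mul_lt_top (by simp) ((measure_union_le _ _).trans_lt (ENNReal.add_lt_top.2 ⟨hs, ht⟩))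
section alg
open MvPolynomial

def lap {n : ℕ} (f : MvPolynomial (Fin n) ℝ) : MvPolynomial (Fin n) ℝ :=
  ∑ i, pderiv i (pderiv i f)

def nsq (n : ℕ) : MvPolynomial (Fin n) ℝ := ∑ i, X i * X i

lemma star_id {n : ℕ} (J : MvPolynomial (Fin n) ℝ →ₗ[ℝ] ℝ) (R : ℝ)
    (hrot : ∀ i j g, J (X i * pderiv j g - X j * pderiv i g) = 0)
    (hsph : ∀ g, J (nsq n * g) = R ^ 2 * J g)
    (d : ℕ) (g : MvPolynomial (Fin n) ℝ) (hg : g.IsHomogeneous d) (j : Fin n) :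
    R ^ 2 * J (pderiv j g) = ((n : ℝ) - 1 + d) * J (X j * g) := by
  have h : ∑ i, J (X i * pderiv j (X i * g) - X j * pderiv i (X i * g)) = 0 :=
    Finset.sum_eq_zero fun i _ => hrot i j _
  rw [← map_sum] at h
  have e : ∑ i, (X i * pderiv j (X i * g) - X j * pderiv i (X i * g)) =
      X j * g + nsq n * pderiv j g - (n : ℝ) • (X j * g) - (d : ℝ) • (X j * g) := by
    have he := hg.sum_X_mul_pderiv
    have h1 : ∑ i, X i * pderiv j (X i * g) = X j * g + nsq n * pderiv j g := by
      simp only [Derivation.leibniz, smul_eq_mul, pderiv_X, mul_add, Finset.sum_add_distrib, nsq,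
        Finset.sum_mul]
      rw [add_comm]
      congr 1
      · rw [Finset.sum_eq_single j]
        · simp
        · intro i _ hi; simp [hi.symm]
        · simp
      · exact Finset.sum_congr rfl fun i _ => by ring
    have h2 : ∑ i, X j * pderiv i (X i * g) = (n : ℝ) • (X j * g) + (d : ℝ) • (X j * g) := by
      rw [← Finset.mul_sum]
      simp only [Derivation.leibniz, smul_eq_mul, pderiv_X_self, mul_one, Finset.sum_add_distrib, he]
      simp [smul_eq_C_mul]
      ring
    rw [Finset.sum_sub_distrib, h1, h2]; abel
  rw [e] at h
  simp only [map_sub, map_add, map_smul, smul_eq_mul, hsph] at h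
  linarith

lemma orth {n : ℕ} (hn : 3 ≤ n) (J : MvPolynomial (Fin n) ℝ →ₗ[ℝ] ℝ) (R : ℝ)
    (hrot : ∀ i j g, J (X i * pderiv j g - X j * pderiv i g) = 0)
    (hsph : ∀ g, J (nsq n * g) = R ^ 2 * J g)
    (m : ℕ) (h : MvPolynomial (Fin n) ℝ) (hh : h.IsHomogeneous m) (hl : lap h = 0)
    (k : ℕ) : k < m → ∀ f : MvPolynomial (Fin n) ℝ, f.IsHomogeneous k → J (h * f) = 0 := by
  induction k using Nat.strong_induction_on with
  | _ k ih =>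
  intro hk f hf
  have hlap : J (h * lap f) = 0 := by
    have hlf : (lap f).IsHomogeneous (k - 1 - 1) :=
      IsHomogeneous.sum _ _ _ fun i _ => (hf.pderiv).pderiv
    rcases Nat.eq_zero_or_pos k with rfl | hk0
    · have : f = C (coeff 0 f) := by
        apply totalDegree_eq_zero_iff_eq_C.1
        exact (totalDegree_zero_iff_isHomogeneous _).2 hf
      have h0 : lap f = 0 := by rw [this]; simp [lap]
      simp [h0]
    · exact ih (k - 1 - 1) (by omega) (by omega) _ hlf
  have hg : ∀ j, (h * pderiv j f - f * pderiv j h).IsHomogeneous (m + k - 1) := by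
    intro j
    rcases Nat.eq_zero_or_pos k with rfl | hk0
    · have : f = C (coeff 0 f) := by
        apply totalDegree_eq_zero_iff_eq_C.1
        exact (totalDegree_zero_iff_isHomogeneous _).2 hf
      have h0 : pderiv j f = 0 := by rw [this]; simp
      rw [h0, mul_zero, zero_sub]
      have := (hf.mul (hh.pderiv (i := j))).neg
      rwa [show 0 + (m - 1) = m + 0 - 1 by omega] at this
    · have h1 := hh.mul (hf.pderiv (i := j))
      have h2 := hf.mul (hh.pderiv (i := j))
      rw [show m + (k - 1) = m + k - 1 by omega] at h1
      rw [show k + (m - 1) = m + k - 1 by omega] at h2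
      exact h1.sub h2
  have hs : ∑ j, R ^ 2 * J (pderiv j (h * pderiv j f - f * pderiv j h)) =
      ∑ j, ((n : ℝ) - 1 + (m + k - 1 : ℕ)) * J (X j * (h * pderiv j f - f * pderiv j h)) :=
    Finset.sum_congr rfl fun j _ => star_id J R hrot hsph _ _ (hg j) j
  rw [← Finset.mul_sum, ← Finset.mul_sum, ← map_sum, ← map_sum] at hs
  have e1 : ∑ j, pderiv j (h * pderiv j f - f * pderiv j h) = h * lap f := by
    have : h * lap f = h * lap f - f * lap h := by rw [hl]; simp
    rw [this]
    simp only [lap, Finset.mul_sum, ← Finset.sum_sub_distrib]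
    refine Finset.sum_congr rfl fun j _ => ?_
    simp only [map_sub, Derivation.leibniz, smul_eq_mul]
    ring
  have e2 : ∑ j, X j * (h * pderiv j f - f * pderiv j h) = ((k : ℝ) - m) • (h * f) := by
    have a1 := hf.sum_X_mul_pderiv
    have a2 := hh.sum_X_mul_pderiv
    have : ∑ j, X j * (h * pderiv j f - f * pderiv j h) =
        h * ∑ j, X j * pderiv j f - f * ∑ j, X j * pderiv j h := by
      simp only [Finset.mul_sum, ← Finset.sum_sub_distrib]
      refine Finset.sum_congr rfl fun j _ => ?_
      ring
    rw [this, a1, a2]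
    simp [smul_eq_C_mul]
    ring
  rw [e1, e2, hlap, map_smul, smul_eq_mul, mul_zero] at hs
  have p1 : ((n : ℝ) - 1 + (m + k - 1 : ℕ)) ≠ 0 := by
    have : (3 : ℝ) ≤ n := by exact_mod_cast hn
    have : (0 : ℝ) ≤ (m + k - 1 : ℕ) := by positivity
    linarith
  have p2 : ((k : ℝ) - m) ≠ 0 := by
    have : (k : ℝ) < m := by exact_mod_cast hk
    linarith
  rcases mul_eq_zero.1 hs.symm with h | h
  · exact absurd h p1
  · rcases mul_eq_zero.1 h with h | h
    · exact absurd h p2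
    · exact h

def linA {n : ℕ} (x : Fin n → ℝ) : MvPolynomial (Fin n) ℝ := ∑ i, C (x i) * X i
def quadB {n : ℕ} (x : Fin n → ℝ) : MvPolynomial (Fin n) ℝ := C (∑ i, x i * x i) * nsq n

lemma linA_hom {n : ℕ} (x : Fin n → ℝ) : (linA x).IsHomogeneous 1 :=
  IsHomogeneous.sum _ _ _ fun i _ => by
    simpa using (isHomogeneous_C (Fin n) (x i)).mul (isHomogeneous_X ℝ i)

lemma nsq_hom (n : ℕ) : (nsq n).IsHomogeneous 2 :=
  IsHomogeneous.sum _ _ _ fun i _ => (isHomogeneous_X ℝ i).mul (isHomogeneous_X ℝ i)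

lemma quadB_hom {n : ℕ} (x : Fin n → ℝ) : (quadB x).IsHomogeneous 2 := by
  have := (isHomogeneous_C (Fin n) (∑ i, x i * x i)).mul (nsq_hom n)
  rwa [zero_add] at this

lemma smul_hom {n m : ℕ} (c : ℝ) {f : MvPolynomial (Fin n) ℝ} (hf : f.IsHomogeneous m) :
    (c • f).IsHomogeneous m := by
  rw [smul_eq_C_mul]
  simpa using (isHomogeneous_C (Fin n) c).mul hf

lemma gz_hom {n : ℕ} (l : ℝ) (x : Fin n → ℝ) (m : ℕ) :
    (gz l (linA x) (quadB x) m).IsHomogeneous m := by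
  induction m using Nat.twoStepInduction with
  | zero => exact isHomogeneous_one _ _
  | one => exact smul_hom _ (linA_hom x)
  | more m h1 h2 =>
    rw [gz]
    have a := (linA_hom x).mul h2
    have b := (quadB_hom x).mul h1
    rw [show 1 + (m + 1) = m + 2 by omega] at a
    rw [show 2 + m = m + 2 by omega] at b
    exact smul_hom _ ((smul_hom _ a).sub (smul_hom _ b))

/-- directional derivative -/
def dird {n : ℕ} (x : Fin n → ℝ) : Derivation ℝ (MvPolynomial (Fin n) ℝ) (MvPolynomial (Fin n) ℝ) :=
  ∑ i, x i • pderiv i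

lemma pderiv_linA {n : ℕ} (x : Fin n → ℝ) (j : Fin n) : pderiv j (linA x) = C (x j) := by
  simp only [linA, map_sum, Derivation.leibniz, pderiv_C, pderiv_X, smul_eq_mul, mul_zero, add_zero]
  rw [Finset.sum_eq_single j]
  · simp
  · intro i _ hi; simp [hi.symm]
  · simp

lemma pderiv_nsq {n : ℕ} (j : Fin n) : pderiv j (nsq n) = 2 * X j := by
  simp only [nsq, map_sum, Derivation.leibniz, pderiv_X, smul_eq_mul]
  rw [Finset.sum_eq_single j]
  · simp; ring
  · intro i _ hi; simp [hi.symm]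
  · simp

lemma dird_apply {n : ℕ} (x : Fin n → ℝ) (f : MvPolynomial (Fin n) ℝ) :
    dird x f = ∑ i, C (x i) * pderiv i f := by
  have : ∀ s : Finset (Fin n), (∑ i ∈ s, x i • pderiv (R := ℝ) i) f = ∑ i ∈ s, C (x i) * pderiv i f := by
    intro s
    induction s using Finset.induction_on with
    | empty => simp
    | insert a s ha ih =>
      rw [Finset.sum_insert ha, Finset.sum_insert ha, Derivation.add_apply, ih,
        Derivation.smul_apply, smul_eq_C_mul]
  exact this _

lemma dird_linA {n : ℕ} (x : Fin n → ℝ) : dird x (linA x) = C (∑ i, x i * x i) := by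
  rw [dird_apply]; simp [pderiv_linA]

lemma dird_quadB {n : ℕ} (x : Fin n → ℝ) :
    dird x (quadB x) = 2 * C (∑ i, x i * x i) * linA x := by
  rw [quadB, Derivation.leibniz, dird_apply x (nsq n), dird_apply]
  simp only [pderiv_nsq, pderiv_C, smul_eq_mul, linA, Finset.mul_sum, mul_zero, Finset.sum_const_zero, add_zero]
  exact Finset.sum_congr rfl fun i _ => by ring

lemma cancel_smul {n : ℕ} {c : ℝ} (hc : c ≠ 0) {f g : MvPolynomial (Fin n) ℝ}
    (h : c • f = c • g) : f = g := by
  have := congrArg (fun z => c⁻¹ • z) h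
  simpa [smul_smul, inv_mul_cancel₀ hc] using this

lemma dird_gz {n : ℕ} (l : ℝ) (x : Fin n → ℝ) (m : ℕ) :
    dird x (gz l (linA x) (quadB x) (m + 1)) =
      ((m : ℝ) + 2 * l) • (C (∑ i, x i * x i) * gz l (linA x) (quadB x) m) := by
  set A := linA x with hA
  set B := quadB x with hB
  set q : MvPolynomial (Fin n) ℝ := C (∑ i, x i * x i) with hq
  have dA : dird x A = q := dird_linA x
  have dB : dird x B = 2 * q * A := dird_quadB x
  induction m using Nat.twoStepInduction with
  | zero => simp [gz, dA]
  | one =>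
    apply cancel_smul (c := ((0 : ℕ) : ℝ) + 2) (by norm_num)
    rw [← Derivation.map_smul, gz_succ_succ]
    simp only [map_sub, Derivation.map_smul, Derivation.leibniz, smul_eq_mul, dA, dB, gz, Derivation.map_one_eq_zero]
    simp only [smul_eq_C_mul, map_add, map_mul, map_one, map_ofNat, Nat.cast_zero, Nat.cast_one, map_zero]
    ring
  | more m h1 h2 =>
    apply cancel_smul (c := ((m + 1 : ℕ) : ℝ) + 2) (by positivity)
    rw [← Derivation.map_smul, gz_succ_succ]
    have h3 := gz_succ_succ l A B m
    simp only [map_sub, Derivation.map_smul, Derivation.leibniz, smul_eq_mul, dA, dB]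
    rw [h1, h2]
    simp only [smul_eq_C_mul, map_add, map_mul, map_one, map_ofNat, Nat.cast_add, Nat.cast_one] at h3 ⊢
    simp only [Nat.cast_ofNat, map_ofNat]
    linear_combination (-q * (C (m:ℝ) + 1 + 2 * C l)) * h3

lemma lap_smul {n : ℕ} (c : ℝ) (f : MvPolynomial (Fin n) ℝ) : lap (c • f) = c • lap f := by
  simp [lap, Finset.smul_sum]
lemma lap_sub {n : ℕ} (g f : MvPolynomial (Fin n) ℝ) : lap (g - f) = lap g - lap f := by
  simp [lap, Finset.sum_sub_distrib]

lemma lap_linA_mul {n : ℕ} (x : Fin n → ℝ) (f : MvPolynomial (Fin n) ℝ) :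
    lap (linA x * f) = 2 * dird x f + linA x * lap f := by
  rw [dird_apply]
  simp only [lap, Finset.mul_sum, ← Finset.sum_add_distrib]
  refine Finset.sum_congr rfl fun i _ => ?_
  simp only [Derivation.leibniz, map_add, smul_eq_mul, pderiv_linA, pderiv_C]
  ring

lemma lap_quadB_mul {n m : ℕ} (x : Fin n → ℝ) (f : MvPolynomial (Fin n) ℝ) (hf : f.IsHomogeneous m) :
    lap (quadB x * f) = (2 * n + 4 * m : ℝ) • (C (∑ i, x i * x i) * f) + quadB x * lap f := by
  have he := hf.sum_X_mul_pderiv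
  have h1 : ∀ i, pderiv i (pderiv i (quadB x * f)) = 2 * (C (∑ i, x i * x i) * f)
      + 4 * C (∑ i, x i * x i) * (X i * pderiv i f) + quadB x * pderiv i (pderiv i f) := by
    intro i
    have h2 : pderiv i (2 : MvPolynomial (Fin n) ℝ) = 0 := by
      rw [← map_ofNat (C : ℝ →+* MvPolynomial (Fin n) ℝ) 2]
      exact pderiv_C
    simp only [quadB, Derivation.leibniz, map_add, smul_eq_mul, pderiv_nsq, pderiv_C, pderiv_X_self, h2]
    simp
    ring
  simp only [lap, h1, Finset.sum_add_distrib, ← Finset.mul_sum, he]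
  simp only [smul_eq_C_mul, Finset.sum_const, Finset.card_univ, Fintype.card_fin, nsmul_eq_mul, map_add, map_mul, map_ofNat, map_natCast]
  ring

lemma lap_gz {n : ℕ} (l : ℝ) (hl : (n : ℝ) = 2 * l + 2) (x : Fin n → ℝ) (m : ℕ) :
    lap (gz l (linA x) (quadB x) m) = 0 := by
  induction m using Nat.twoStepInduction with
  | zero => simp [gz, lap]
  | one => simp [gz, lap, pderiv_linA]
  | more m h1 h2 =>
    apply cancel_smul (c := (m : ℝ) + 2) (by positivity)
    rw [← lap_smul, gz_succ_succ, lap_sub, lap_smul, lap_smul, lap_linA_mul,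
      lap_quadB_mul x _ (gz_hom l x m), h1, h2, dird_gz, hl]
    simp only [smul_eq_C_mul, map_add, map_mul, map_one, map_ofNat]
    ring
end alg

section geo
open MvPolynomial

abbrev EE (n : ℕ) := EuclideanSpace ℝ (Fin n)

def ev {n : ℕ} (y : EE n) : MvPolynomial (Fin n) ℝ →ₐ[ℝ] ℝ := aeval (fun i => y i)

lemma ev_eq {n : ℕ} (y : EE n) (p : MvPolynomial (Fin n) ℝ) :
    ev y p = eval (fun i => y i) p := by
  rw [ev, aeval_eq_eval]

lemma ev_cont {n : ℕ} (p : MvPolynomial (Fin n) ℝ) : Continuous (fun y : EE n => ev y p) := by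
  induction p using MvPolynomial.induction_on with
  | C a => simpa [ev] using continuous_const
  | add p q hp hq =>
    simp only [map_add]
    exact hp.add hq
  | mul_X p i hp =>
    simp only [map_mul]
    refine hp.mul ?_
    simp only [ev, aeval_X]
    fun_prop

def sm (n : ℕ) (R : ℝ) : Measure (EE n) := (μH[(n : ℝ) - 1]).restrict (sphere 0 R)

lemma sm_finite (n : ℕ) (hn : 1 ≤ n) (R : ℝ) (hR : 0 < R) : IsFiniteMeasure (sm n R) :=
  ⟨by rw [sm, Measure.restrict_apply_univ]; exact sphere_finite n hn R hR⟩

lemma sm_ae (n : ℕ) (R : ℝ) : ∀ᵐ y ∂(sm n R), ‖y‖ = R := by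
  have := ae_restrict_mem (μ := μH[(n : ℝ) - 1]) (isClosed_sphere (x := (0 : EE n)) (ε := R)).measurableSet
  filter_upwards [this] with y hy
  simpa using hy

lemma ev_bdd {n : ℕ} (R : ℝ) (p : MvPolynomial (Fin n) ℝ) :
    ∃ M, 0 ≤ M ∧ ∀ y : EE n, ‖y‖ = R → |ev y p| ≤ M := by
  obtain ⟨M, hM⟩ := (isCompact_sphere (0 : EE n) R).exists_bound_of_continuousOn (ev_cont p).continuousOn
  refine ⟨max M 0, le_max_right _ _, fun y hy => (hM y (by simpa using hy)).trans (le_max_left _ _)⟩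

lemma ev_int {n : ℕ} (hn : 1 ≤ n) (R : ℝ) (hR : 0 < R) (p : MvPolynomial (Fin n) ℝ) :
    Integrable (fun y => ev y p) (sm n R) := by
  have := sm_finite n hn R hR
  obtain ⟨M, _, hM⟩ := ev_bdd R p
  refine Integrable.of_bound (ev_cont p).aestronglyMeasurable M ?_
  filter_upwards [sm_ae n R] with y hy using hM y hy

def JJ {n : ℕ} (hn : 1 ≤ n) (R : ℝ) (hR : 0 < R) : MvPolynomial (Fin n) ℝ →ₗ[ℝ] ℝ where
  toFun p := ∫ y, ev y p ∂(sm n R)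
  map_add' p q := by
    simp only [map_add]
    exact integral_add (ev_int hn R hR p) (ev_int hn R hR q)
  map_smul' c p := by
    simp only [map_smul, RingHom.id_apply]
    exact integral_smul c _

lemma JJ_apply {n : ℕ} (hn : 1 ≤ n) (R : ℝ) (hR : 0 < R) (p : MvPolynomial (Fin n) ℝ) :
    JJ hn R hR p = ∫ y, ev y p ∂(sm n R) := rfl

lemma ev_nsq {n : ℕ} (y : EE n) : ev y (nsq n) = ‖y‖ ^ 2 := by
  rw [EuclideanSpace.real_norm_sq_eq]
  simp [ev, nsq, pow_two]

lemma JJ_sph {n : ℕ} (hn : 1 ≤ n) (R : ℝ) (hR : 0 < R) (g : MvPolynomial (Fin n) ℝ) :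
    JJ hn R hR (nsq n * g) = R ^ 2 * JJ hn R hR g := by
  rw [JJ_apply, JJ_apply, ← integral_const_mul]
  refine integral_congr_ae ?_
  filter_upwards [sm_ae n R] with y hy
  rw [map_mul, ev_nsq, hy]

def rotFun {n : ℕ} (i j : Fin n) (t : ℝ) (y : EE n) : EE n :=
  y + ((Real.cos t - 1) * y i - Real.sin t * y j) • EuclideanSpace.single i (1 : ℝ)
    + (Real.sin t * y i + (Real.cos t - 1) * y j) • EuclideanSpace.single j (1 : ℝ)

lemma rotFun_norm {n : ℕ} (i j : Fin n) (hij : i ≠ j) (t : ℝ) (y : EE n) :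
    ‖rotFun i j t y‖ = ‖y‖ := by
  have h : ‖rotFun i j t y‖ ^ 2 = ‖y‖ ^ 2 := by
    rw [rotFun, norm_add_sq_real, norm_add_sq_real]
    simp only [norm_smul, inner_smul_right, inner_add_left, inner_smul_left,
      EuclideanSpace.inner_single_right, PiLp.norm_single]
    simp [hij, hij.symm]
    have := Real.sin_sq_add_cos_sq t
    linear_combination (y i ^ 2 + y j ^ 2) * this
  exact (sq_eq_sq₀ (norm_nonneg _) (norm_nonneg _)).1 h

def rotLI {n : ℕ} (i j : Fin n) (hij : i ≠ j) (t : ℝ) : EE n →ₗᵢ[ℝ] EE n where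
  toFun := rotFun i j t
  map_add' y z := by
    ext k
    simp [rotFun]
    split_ifs <;> ring
  map_smul' c y := by
    ext k
    simp [rotFun]
    split_ifs <;> ring
  norm_map' y := rotFun_norm i j hij t y

lemma rot_int {n : ℕ} (R : ℝ) (i j : Fin n) (hij : i ≠ j) (t : ℝ) (f : EE n → ℝ) :
    ∫ y, f (rotFun i j t y) ∂(sm n R) = ∫ y, f y ∂(sm n R) := by
  let e : EE n ≃ₗᵢ[ℝ] EE n := (rotLI i j hij t).toLinearIsometryEquiv rfl
  have he : ∀ y, e y = rotFun i j t y := fun y => rfl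
  have h1 := e.toIsometryEquiv.measurePreserving_hausdorffMeasure ((n : ℝ) - 1)
  have h2 := h1.restrict_preimage (isClosed_sphere (x := (0 : EE n)) (ε := R)).measurableSet
  have h3 : e.toIsometryEquiv ⁻¹' (sphere (0 : EE n) R) = sphere 0 R := by
    ext y
    simp
  rw [h3] at h2
  exact h2.integral_comp e.toHomeomorph.measurableEmbedding f

lemma ev_deriv {n : ℕ} (c : ℝ → EE n) (c' : Fin n → ℝ) (t : ℝ)
    (hc : ∀ k, HasDerivAt (fun s => c s k) (c' k) t) (g : MvPolynomial (Fin n) ℝ) :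
    HasDerivAt (fun s => ev (c s) g) (∑ k, ev (c t) (pderiv k g) * c' k) t := by
  induction g using MvPolynomial.induction_on with
  | C a => simpa [ev] using hasDerivAt_const t a
  | add p q hp hq =>
    simp only [map_add, add_mul, Finset.sum_add_distrib]
    exact hp.add hq
  | mul_X p i hp =>
    have hX : ∀ s, ev (c s) (X i) = c s i := fun s => by simp [ev]
    simp only [map_mul, hX]
    refine (hp.mul (hc i)).congr_deriv ?_
    simp only [Derivation.leibniz, map_add, smul_eq_mul, map_mul, hX, pderiv_X, add_mul,
      Finset.sum_add_distrib]
    rw [add_comm]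
    congr 1
    · rw [Finset.sum_eq_single i]
      · simp
      · intro k _ hk; simp [hk.symm]
      · simp
    · rw [Finset.sum_mul]
      exact Finset.sum_congr rfl fun k _ => by ring

lemma rot_deriv {n : ℕ} (i j : Fin n) (hij : i ≠ j) (y : EE n) (g : MvPolynomial (Fin n) ℝ) (t : ℝ) :
    HasDerivAt (fun s => ev (rotFun i j s y) g)
      (ev (rotFun i j t y) (X i * pderiv j g - X j * pderiv i g)) t := by
  have hci : (rotFun i j t y) i = Real.cos t * y i - Real.sin t * y j := by
    simp [rotFun, hij]; ring
  have hcj : (rotFun i j t y) j = Real.sin t * y i + Real.cos t * y j := by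
    simp [rotFun, hij.symm]; ring
  have h := ev_deriv (fun s => rotFun i j s y)
    (fun k => (- (rotFun i j t y) j) * (if k = i then 1 else 0) + (rotFun i j t y) i * (if k = j then 1 else 0))
    t ?_ g
  · refine h.congr_deriv ?_
    simp only [mul_add, Finset.sum_add_distrib, map_sub, map_mul]
    simp [ev]
    ring
  · intro k
    have h1 : HasDerivAt (fun s => (Real.cos s - 1) * y i - Real.sin s * y j)
        (- (rotFun i j t y) j) t := by
      refine ((((Real.hasDerivAt_cos t).sub_const 1).mul_const (y i)).sub
        ((Real.hasDerivAt_sin t).mul_const (y j))).congr_deriv ?_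
      rw [hcj]; ring
    have h2 : HasDerivAt (fun s => Real.sin s * y i + (Real.cos s - 1) * y j)
        ((rotFun i j t y) i) t := by
      refine (((Real.hasDerivAt_sin t).mul_const (y i)).add
        (((Real.hasDerivAt_cos t).sub_const 1).mul_const (y j))).congr_deriv ?_
      rw [hci]; ring
    have h3 := ((h1.mul_const (if k = i then 1 else 0)).add (h2.mul_const (if k = j then 1 else 0))).const_add (y k)
    refine h3.congr_of_eventuallyEq (Filter.Eventually.of_forall fun s => ?_)
    simp [rotFun, add_assoc, Pi.single_apply]

lemma JJ_rot {n : ℕ} (hn : 1 ≤ n) (R : ℝ) (hR : 0 < R) (i j : Fin n) (g : MvPolynomial (Fin n) ℝ) :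
    JJ hn R hR (X i * pderiv j g - X j * pderiv i g) = 0 := by
  by_cases hij : i = j
  · subst hij; simp
  obtain ⟨P, hP⟩ : ∃ P, P = X i * pderiv j g - X j * pderiv i g := ⟨_, rfl⟩
  rw [← hP, JJ_apply]
  have := sm_finite n hn R hR
  obtain ⟨M, hM0, hM⟩ := ev_bdd R P
  have hrc : ∀ t, Continuous (rotFun i j t) := fun t => (rotLI i j hij t).continuous
  have key := hasDerivAt_integral_of_dominated_loc_of_deriv_le (μ := sm n R)
    (F := fun t y => ev (rotFun i j t y) g)
    (F' := fun t y => ev (rotFun i j t y) P)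
    (x₀ := (0 : ℝ)) (s := Set.univ) (bound := fun _ => M) Filter.univ_mem
    (Filter.Eventually.of_forall fun t => ((ev_cont g).comp (hrc t)).aestronglyMeasurable)
    (by
      have : rotFun i j (0 : ℝ) = (id : EE n → EE n) := by
        funext y; simp [rotFun]
      simp only [this]
      exact ev_int hn R hR g)
    ((ev_cont _).comp (hrc 0)).aestronglyMeasurable
    (by
      filter_upwards [sm_ae n R] with y hy t _
      exact hM _ (by rw [rotFun_norm i j hij, hy]))
    (integrable_const M)
    (by
      filter_upwards with y t _
      exact hP ▸ rot_deriv i j hij y g t)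
  have h2 := key.2
  simp only [rot_int R i j hij _ (fun y => ev y g),
    rot_int R i j hij _ (fun y => ev y P)] at h2
  exact h2.unique (hasDerivAt_const _ _)

lemma polyx {n : ℕ} (J : MvPolynomial (Fin n) ℝ →ₗ[ℝ] ℝ) (R : ℝ)
    (hsph : ∀ g, J (nsq n * g) = R ^ 2 * J g) (l t : ℝ) (m : ℕ) :
    ∀ f : MvPolynomial (Fin n) ℝ, ∃ q : MvPolynomial (Fin n) ℝ, q.totalDegree ≤ m ∧
      ∀ x : Fin n → ℝ, J (gz l (linA fun i => t * x i) (quadB fun i => t * x i) m * f) = eval x q := by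
  have hlin : ∀ (x : Fin n → ℝ) (g f : MvPolynomial (Fin n) ℝ),
      J (linA (fun i => t * x i) * g * f) = ∑ i, t * x i * J (g * (X i * f)) := by
    intro x g f
    rw [linA, Finset.sum_mul, Finset.sum_mul, map_sum]
    refine Finset.sum_congr rfl fun i _ => ?_
    rw [← smul_eq_mul (t * x i), ← map_smul, smul_eq_C_mul]
    congr 1; ring
  have hquad : ∀ (x : Fin n → ℝ) (g f : MvPolynomial (Fin n) ℝ),
      J (quadB (fun i => t * x i) * g * f) = t ^ 2 * R ^ 2 * (∑ i, x i * x i) * J (g * f) := by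
    intro x g f
    have : quadB (fun i => t * x i) * g * f = (∑ i, (t * x i) * (t * x i)) • (nsq n * (g * f)) := by
      rw [quadB, smul_eq_C_mul]; ring
    rw [this, map_smul, hsph, smul_eq_mul]
    have : (∑ i, (t * x i) * (t * x i)) = t ^ 2 * ∑ i, x i * x i := by
      rw [Finset.mul_sum]; exact Finset.sum_congr rfl fun i _ => by ring
    rw [this]; ring
  have hdX : ∀ i : Fin n, (X i : MvPolynomial (Fin n) ℝ).totalDegree ≤ 1 := fun i => by simp
  have hdC : ∀ (c : ℝ) (q : MvPolynomial (Fin n) ℝ), (C c * q).totalDegree ≤ q.totalDegree := by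
    intro c q
    have := totalDegree_mul (C c) q
    rwa [totalDegree_C, zero_add] at this
  induction m using Nat.twoStepInduction with
  | zero =>
    intro f
    exact ⟨C (J f), by simp, fun x => by simp [gz]⟩
  | one =>
    intro f
    refine ⟨∑ i, C (2 * l * t * J (X i * f)) * X i, ?_, fun x => ?_⟩
    · exact totalDegree_finsetSum_le fun i _ => (hdC _ _).trans (hdX i)
    · have := hlin x 1 f
      simp only [mul_one, one_mul] at this
      rw [gz, smul_mul_assoc, map_smul, this, smul_eq_mul, Finset.mul_sum]
      simp only [map_sum, map_mul, eval_C, eval_X]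
      exact Finset.sum_congr rfl fun i _ => by ring
  | more m h1 h2 =>
    intro f
    obtain ⟨q0, hq0, e0⟩ := h1 f
    choose q1 hq1 e1 using fun i => h2 (X i * f)
    refine ⟨C ((m : ℝ) + 2)⁻¹ * (C (2 * ((m : ℝ) + 1 + l)) * ∑ i, C t * (X i * q1 i) -
      C ((m : ℝ) + 2 * l) * (C (t ^ 2 * R ^ 2) * (nsq n * q0))), ?_, fun x => ?_⟩
    · refine (hdC _ _).trans ((totalDegree_sub _ _).trans (max_le ?_ ?_))
      · refine (hdC _ _).trans (totalDegree_finsetSum_le fun i _ => (hdC _ _).trans ?_)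
        refine (totalDegree_mul _ _).trans ?_
        have := hdX i
        have := hq1 i
        omega
      · refine (hdC _ _).trans ((hdC _ _).trans ((totalDegree_mul _ _).trans ?_))
        have := (nsq_hom n).totalDegree_le
        omega
    · rw [gz, smul_mul_assoc, map_smul, sub_mul, map_sub, smul_mul_assoc, smul_mul_assoc, map_smul,
        map_smul, hlin, hquad, e0]
      simp only [e1]
      simp only [smul_eq_mul, map_mul, map_sub, map_sum, eval_C, eval_X, nsq]
      congr 3
      · exact Finset.sum_congr rfl fun i _ => by ring
      · ring
end geo

theorem stmt_0 (n k : ℕ) (hn : 3 ≤ n) (R : ℝ) (hR : 0 < R)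
    (p : MvPolynomial (Fin n) ℝ) (hp : p.totalDegree ≤ k) :
    ∃ q : MvPolynomial (Fin n) ℝ, q.totalDegree ≤ k ∧
      ∀ x : EuclideanSpace ℝ (Fin n), ‖x‖ < R →
        (∫ y in sphere (0 : EuclideanSpace ℝ (Fin n)) R,
            ‖x - y‖ ^ ((2 : ℝ) - n) * MvPolynomial.eval (fun i => y i) p
            ∂μH[(n : ℝ) - 1])
          = MvPolynomial.eval (fun i => x i) q := by
  have hn1 : 1 ≤ n := by omega
  have := sm_finite n hn1 R hR
  set l : ℝ := ((n : ℝ) - 2) / 2 with hl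
  set J := JJ hn1 R hR with hJ
  set t : ℝ := (R ^ 2)⁻¹ with ht
  choose q hqd hq using fun m => polyx J R (JJ_sph hn1 R hR) l t m p
  refine ⟨MvPolynomial.C ((R ^ 2) ^ (-l)) * ∑ m ∈ Finset.range (k + 1), q m, ?_, ?_⟩
  · refine (MvPolynomial.totalDegree_mul _ _).trans ?_
    rw [MvPolynomial.totalDegree_C, zero_add]
    refine MvPolynomial.totalDegree_finsetSum_le fun m hm => (hqd m).trans ?_
    have := Finset.mem_range.1 hm
    omega
  intro x hx
  set u : Fin n → ℝ := fun i => t * x i with hu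
  set G : ℕ → MvPolynomial (Fin n) ℝ := gz l (linA u) (quadB u) with hG
  -- pointwise data
  have hB : ∑ i, u i * u i = t ^ 2 * ‖x‖ ^ 2 := by
    rw [EuclideanSpace.real_norm_sq_eq, Finset.mul_sum]
    exact Finset.sum_congr rfl fun i _ => by simp only [hu]; ring
  have hA : ∀ y : EE n, ev y (linA u) = t * inner ℝ x y := by
    intro y
    simp only [ev, linA, hu, map_sum, map_mul, MvPolynomial.aeval_X, MvPolynomial.aeval_C,
      PiLp.inner_apply, Finset.mul_sum]
    exact Finset.sum_congr rfl fun i _ => by simp; ring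
  set b : ℝ := t ^ 2 * ‖x‖ ^ 2 * R ^ 2 with hb
  have hB2 : ∀ y : EE n, ‖y‖ = R → ev y (quadB u) = b := by
    intro y hy
    rw [quadB, map_mul, ev_nsq, hy, hB]
    simp [ev, hb]
  have hbt : b = (‖x‖ / R) ^ 2 := by
    rw [hb, ht]; field_simp
  have hxR : ‖x‖ / R < 1 := (div_lt_one hR).2 hx
  have hxR0 : 0 ≤ ‖x‖ / R := by positivity
  have hsb : Real.sqrt b = ‖x‖ / R := by rw [hbt, Real.sqrt_sq hxR0]
  have hb1 : b < 1 := by rw [hbt]; nlinarith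
  have hgen : ∀ y : EE n, ‖y‖ = R →
      (∀ m, |ev y (G m)| ≤ bnd l (‖x‖ / R) m) ∧
      HasSum (fun m => ev y (G m)) ((1 - 2 * (t * inner ℝ x y) + b) ^ (-l)) := by
    intro y hy
    have h := gz_real l (t * inner ℝ x y) b ?_ hb1
    · have e : ∀ m, ev y (G m) = gz l (t * inner ℝ x y) b m := by
        intro m
        rw [hG, gz_map, hA, hB2 y hy]
      simp only [e]
      rw [hsb] at h
      exact h
    · have h1 := abs_real_inner_le_norm x y
      rw [hy] at h1
      have h2 : (inner ℝ x y) ^ 2 ≤ (‖x‖ * R) ^ 2 := by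
        rw [← sq_abs]
        exact pow_le_pow_left₀ (abs_nonneg _) h1 2
      have h3 : 0 ≤ t ^ 2 := sq_nonneg t
      rw [hb]
      nlinarith
  have hker : ∀ y : EE n, ‖y‖ = R → ‖x - y‖ ^ ((2 : ℝ) - n) =
      (R ^ 2) ^ (-l) * (1 - 2 * (t * inner ℝ x y) + b) ^ (-l) := by
    intro y hy
    have h1 : ‖x - y‖ ^ 2 = R ^ 2 * (1 - 2 * (t * inner ℝ x y) + b) := by
      rw [norm_sub_sq_real, hy, hb, ht]
      field_simp
      ring
    have h2 : 0 ≤ 1 - 2 * (t * inner ℝ x y) + b := by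
      have : 0 ≤ R ^ 2 * (1 - 2 * (t * inner ℝ x y) + b) := by rw [← h1]; positivity
      exact nonneg_of_mul_nonneg_right this (by positivity)
    rw [← Real.mul_rpow (by positivity) h2, ← h1, ← Real.rpow_natCast, ← Real.rpow_mul (norm_nonneg _)]
    congr 1
    rw [hl]; push_cast; ring
  obtain ⟨M, hM0, hM⟩ := ev_bdd R p
  have hsum : HasSum (fun m => ∫ y, ev y (G m * p) ∂(sm n R))
      (∫ y, (1 - 2 * (t * inner ℝ x y) + b) ^ (-l) * ev y p ∂(sm n R)) := by
    refine hasSum_integral_of_dominated_convergence (fun m _ => bnd l (‖x‖ / R) m * M) ?_ ?_ ?_ ?_ ?_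
    · intro m; exact (ev_cont _).aestronglyMeasurable
    · intro m
      filter_upwards [sm_ae n R] with y hy
      rw [map_mul, norm_mul]
      exact mul_le_mul ((hgen y hy).1 m) (hM y hy) (norm_nonneg _)
        ((abs_nonneg _).trans ((hgen y hy).1 m))
    · exact Filter.Eventually.of_forall fun y => (bnd_summable l _ hxR0 hxR).mul_right M
    · exact integrable_const _
    · filter_upwards [sm_ae n R] with y hy
      simp only [map_mul]
      exact (hgen y hy).2.mul_right _
  have hzero : ∀ m ∉ Finset.range (k + 1), ∫ y, ev y (G m * p) ∂(sm n R) = 0 := by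
    intro m hm
    have hm' : k < m := by
      have := Finset.mem_range.not.1 hm
      omega
    rw [← JJ_apply hn1 R hR, ← MvPolynomial.sum_homogeneousComponent p, Finset.mul_sum, map_sum]
    refine Finset.sum_eq_zero fun d hd => ?_
    have hd' := Finset.mem_range.1 hd
    exact orth hn J R (fun i j g => JJ_rot hn1 R hR i j g) (JJ_sph hn1 R hR) m (G m)
      (gz_hom l u m) (lap_gz l (by rw [hl]; ring) u m) d (by omega) _
      (MvPolynomial.homogeneousComponent_isHomogeneous d p)
  have hfin := hsum.unique (hasSum_sum_of_ne_finset_zero hzero)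
  calc _ = ∫ y, (R ^ 2) ^ (-l) * ((1 - 2 * (t * inner ℝ x y) + b) ^ (-l) * ev y p) ∂(sm n R) := by
        change ∫ y, _ ∂(sm n R) = _
        refine integral_congr_ae ?_
        filter_upwards [sm_ae n R] with y hy
        rw [hker y hy, ev_eq, mul_assoc]
    _ = _ := by
        rw [integral_const_mul, hfin, map_mul, MvPolynomial.eval_C, map_sum]
        congr 1
        refine Finset.sum_congr rfl fun m _ => ?_
        rw [← hq m, ← JJ_apply hn1 R hR]
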